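/- For all integers m, t, n ≥ 1, every red/blue edge-coloring of the complete graph on {1,…,N}, where N = (R(K_t,K_n) − 1)·m + 1, contains a blue clique of size n or a red t-clique chain consisting of m cliques. -/

import Mathlib

/-- `χ i j` is the color of the edge `{i, j}` for `i < j`: `true` = red, `false` = blue.
The classical Ramsey property: every red/blue coloring of `K_N` contains a red `K_s`
or a blue `K_n`. -/
def HasRamseyProp (s n N : ℕ) : Prop :=
  ∀ χ : Fin N → Fin N → Bool,
    (∃ f : Fin s → Fin N, StrictMono f ∧ ∀ i j : Fin s, i < j → χ (f i) (f j) = true) ∨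
    (∃ f : Fin n → Fin N, StrictMono f ∧ ∀ i j : Fin n, i < j → χ (f i) (f j) = false)

/-- The classical Ramsey number `R(K_s, K_n)`. -/
noncomputable def ramsey (s n : ℕ) : ℕ := sInf {N | HasRamseyProp s n N}

/-- A `b`-monochromatic `t`-clique chain with `m` cliques: cliques `X_0, …, X_{m−1}`,
each of size `t`, all of whose internal edges have color `b`, such that consecutive
cliques intersect in exactly one vertex, which is the largest element of the earlier
clique and the smallest element of the later one. -/
def IsCliqueChain {N : ℕ} (χ : Fin N → Fin N → Bool) (b : Bool) (t m : ℕ)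
    (X : Fin m → Finset (Fin N)) : Prop :=
  (∀ i : Fin m, (X i).card = t) ∧
  (∀ i : Fin m, ∀ a ∈ X i, ∀ c ∈ X i, a < c → χ a c = b) ∧
  (∀ (i : ℕ) (h1 : i < m) (h2 : i + 1 < m),
    (X ⟨i, h1⟩ ∩ X ⟨i + 1, h2⟩).card = 1 ∧
    ∃ z : Fin N, z ∈ X ⟨i, h1⟩ ∧ z ∈ X ⟨i + 1, h2⟩ ∧
      (∀ a ∈ X ⟨i, h1⟩, a ≤ z) ∧ (∀ c ∈ X ⟨i + 1, h2⟩, z ≤ c))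

/-- Finset form of Ramsey's theorem. -/
theorem aux_ramsey (s n : ℕ) : ∃ N : ℕ, ∀ (M : ℕ) (χ : Fin M → Fin M → Bool) (S : Finset (Fin M)),
    N ≤ S.card →
    (∃ T ⊆ S, T.card = s ∧ ∀ a ∈ T, ∀ c ∈ T, a < c → χ a c = true) ∨
    (∃ T ⊆ S, T.card = n ∧ ∀ a ∈ T, ∀ c ∈ T, a < c → χ a c = false) := by
  induction s generalizing n with
  | zero => exact ⟨0, fun M χ S _ => Or.inl ⟨∅, by simp⟩⟩
  | succ s ihs =>
    induction n with
    | zero => exact ⟨0, fun M χ S _ => Or.inr ⟨∅, by simp⟩⟩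
    | succ n ihn =>
      obtain ⟨A, hA⟩ := ihs (n + 1)
      obtain ⟨B, hB⟩ := ihn
      refine ⟨A + B + 1, fun M χ S hS => ?_⟩
      have hne : S.Nonempty := Finset.card_pos.mp (by omega)
      set v := S.min' hne with hv
      have hvS : v ∈ S := S.min'_mem hne
      have hlt : ∀ x ∈ S.erase v, v < x := fun x hx =>
        lt_of_le_of_ne (S.min'_le x (Finset.mem_of_mem_erase hx)) (Finset.ne_of_mem_erase hx).symm
      have hc := Finset.card_erase_of_mem hvS
      have hsplit := Finset.card_filter_add_card_filter_not (s := S.erase v) (fun x => χ v x = true)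
      have ext : ∀ (b : Bool) (k : ℕ) (T : Finset (Fin M)),
          T ⊆ (S.erase v).filter (fun x => χ v x = b) → T.card = k →
          (∀ a ∈ T, ∀ c ∈ T, a < c → χ a c = b) →
          ∃ T ⊆ S, T.card = k + 1 ∧ ∀ a ∈ T, ∀ c ∈ T, a < c → χ a c = b := by
        intro b k T hT hk hcl
        have h1 : ∀ x ∈ T, x ∈ S.erase v ∧ χ v x = b := fun x hx => by
          simpa only [Finset.mem_filter] using hT hx
        refine ⟨insert v T, ?_, ?_, ?_⟩
        · intro x hx
          rcases Finset.mem_insert.mp hx with rfl | hx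
          · exact hvS
          · exact Finset.mem_of_mem_erase (h1 x hx).1
        · rw [Finset.card_insert_of_notMem, hk]
          intro h
          exact lt_irrefl _ (hlt _ (h1 v h).1)
        · intro a ha c hc hac
          rcases Finset.mem_insert.mp ha with rfl | ha <;> rcases Finset.mem_insert.mp hc with rfl | hc
          · exact absurd hac (lt_irrefl _)
          · exact (h1 c hc).2
          · exact absurd hac (not_lt.mpr (hlt _ (h1 a ha).1).le)
          · exact hcl a ha c hc hac
      have hsub : ∀ b, (S.erase v).filter (fun x => χ v x = b) ⊆ S := fun b =>
        (Finset.filter_subset _ _).trans (Finset.erase_subset _ _)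
      simp only [Bool.not_eq_true] at hsplit
      rcases le_or_gt A ((S.erase v).filter (fun x => χ v x = true)).card with h | h
      · rcases hA M χ _ h with ⟨T, hT, hk, hcl⟩ | ⟨T, hT, hk, hcl⟩
        · exact Or.inl (ext true s T hT hk hcl)
        · exact Or.inr ⟨T, hT.trans (hsub _), hk, hcl⟩
      · rcases hB M χ ((S.erase v).filter (fun x => χ v x = false)) (by omega) with
          ⟨T, hT, hk, hcl⟩ | ⟨T, hT, hk, hcl⟩
        · exact Or.inl ⟨T, hT.trans (hsub _), hk, hcl⟩
        · exact Or.inr (ext false n T hT hk hcl)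

theorem aux_ramsey_prop (s n : ℕ) : HasRamseyProp s n (ramsey s n) := by
  have hne : {N | HasRamseyProp s n N}.Nonempty := by
    obtain ⟨N, hN⟩ := aux_ramsey s n
    refine ⟨N, fun χ => ?_⟩
    have key : ∀ (b : Bool) (k : ℕ) (T : Finset (Fin N)), T.card = k →
        (∀ a ∈ T, ∀ c ∈ T, a < c → χ a c = b) →
        ∃ f : Fin k → Fin N, StrictMono f ∧ ∀ i j : Fin k, i < j → χ (f i) (f j) = b := by
      intro b k T hk hcl
      refine ⟨T.orderEmbOfFin hk, (T.orderEmbOfFin hk).strictMono, fun i j hij => ?_⟩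
      exact hcl _ (T.orderEmbOfFin_mem hk i) _ (T.orderEmbOfFin_mem hk j)
        ((T.orderEmbOfFin hk).strictMono hij)
    rcases hN N χ Finset.univ (by simp) with ⟨T, -, hk, hcl⟩ | ⟨T, -, hk, hcl⟩
    · exact Or.inl (key _ _ T hk hcl)
    · exact Or.inr (key _ _ T hk hcl)
  exact Nat.sInf_mem hne

/-- There is a red chain of `k` cliques ending at `v`. -/
def ChainEnd {N : ℕ} (χ : Fin N → Fin N → Bool) (t : ℕ) : ℕ → Fin N → Prop
  | 0, _ => True
  | k + 1, w => ∃ u, ChainEnd χ t k u ∧ ∃ Y : Finset (Fin N), Y.card = t ∧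
      (∀ a ∈ Y, ∀ c ∈ Y, a < c → χ a c = true) ∧ u ∈ Y ∧ w ∈ Y ∧ ∀ x ∈ Y, u ≤ x ∧ x ≤ w

theorem chainEnd_chain {N : ℕ} (χ : Fin N → Fin N → Bool) (t k : ℕ) (v : Fin N)
    (h : ChainEnd χ t k v) : ∃ X : ℕ → Finset (Fin N),
      (∀ i < k, (X i).card = t ∧ ∀ a ∈ X i, ∀ c ∈ X i, a < c → χ a c = true) ∧
      (∀ i, i + 1 < k → ∃ z : Fin N, z ∈ X i ∧ z ∈ X (i + 1) ∧
        (∀ a ∈ X i, a ≤ z) ∧ (∀ c ∈ X (i + 1), z ≤ c)) ∧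
      (∀ i, i + 1 = k → v ∈ X i ∧ ∀ a ∈ X i, a ≤ v) := by
  induction k generalizing v with
  | zero => exact ⟨fun _ => ∅, by simp⟩
  | succ k ih =>
    obtain ⟨u, hu, Y, hY, hcl, huY, hvY, hb⟩ := h
    obtain ⟨X, h1, h2, h3⟩ := ih u hu
    refine ⟨fun i => if i = k then Y else X i, ?_, ?_, ?_⟩
    · intro i hi
      by_cases hik : i = k
      · simp only [hik, if_true]; exact ⟨hY, hcl⟩
      · simp only [hik, if_false]; exact h1 i (by omega)
    · intro i hi
      have hik : i ≠ k := by omega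
      by_cases hik' : i + 1 = k
      · simp only [hik, hik', if_true, if_false]
        exact ⟨u, (h3 i hik').1, huY, (h3 i hik').2, fun c hc => (hb c hc).1⟩
      · simp only [hik, hik', if_false]
        exact h2 i (by omega)
    · intro i hi
      have hik : i = k := by omega
      simp only [hik, if_true]
      exact ⟨hvY, fun a ha => (hb a ha).2⟩

/-- for `m, t, n ≥ 1`, every red/blue edge-coloring of `K_N` with
`N = (R(K_t,K_n) − 1)·m + 1` contains a blue clique of size `n` or a red `t`-clique
chain of `m` cliques. -/
theorem stmt13 (m t n N : ℕ) (hm : 1 ≤ m) (ht : 1 ≤ t) (hn : 1 ≤ n)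
    (hN : N = (ramsey t n - 1) * m + 1) (χ : Fin N → Fin N → Bool) :
    (∃ f : Fin n → Fin N, StrictMono f ∧ ∀ i j : Fin n, i < j → χ (f i) (f j) = false) ∨
    (∃ X : Fin m → Finset (Fin N), IsCliqueChain χ true t m X) := by
  classical
  by_cases hex : ∃ v, ChainEnd χ t m v
  · right
    obtain ⟨v, hv⟩ := hex
    obtain ⟨X, h1, h2, -⟩ := chainEnd_chain χ t m v hv
    refine ⟨fun i => X i, fun i => (h1 i i.2).1, fun i => (h1 i i.2).2, ?_⟩
    intro i hi hi'
    obtain ⟨z, hz, hz', ha, hc⟩ := h2 i hi'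
    refine ⟨Finset.card_eq_one.mpr ⟨z, ?_⟩, z, hz, hz', ha, hc⟩
    ext x
    simp only [Finset.mem_inter, Finset.mem_singleton]
    constructor
    · rintro ⟨hx, hx'⟩
      exact le_antisymm (ha x hx) (hc x hx')
    · rintro rfl
      exact ⟨hz, hz'⟩
  · left
    push Not at hex
    let g : Fin N → ℕ := fun v => Nat.findGreatest (fun k => ChainEnd χ t k v) m
    have hP : ∀ v, ChainEnd χ t (g v) v := fun v =>
      Nat.findGreatest_spec (P := fun k => ChainEnd χ t k v) (Nat.zero_le m) trivial
    have hgm : ∀ v, g v < m := fun v =>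
      lt_of_le_of_ne (Nat.findGreatest_le m) (fun h => hex v (h ▸ hP v))
    have hpig : ∃ k ∈ Finset.range m, ramsey t n - 1 <
        (Finset.univ.filter (fun v => g v = k)).card := by
      apply Finset.exists_lt_card_fiber_of_mul_lt_card_of_maps_to
      · intro v _
        exact Finset.mem_range.mpr (hgm v)
      · rw [Finset.card_range, Finset.card_univ, Fintype.card_fin, hN, mul_comm]
        exact Nat.lt_succ_self _
    obtain ⟨k, hk, hcard⟩ := hpig
    obtain ⟨S, hS, hSc⟩ := Finset.exists_subset_card_eq
      (show ramsey t n ≤ (Finset.univ.filter (fun v => g v = k)).card by omega)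
    let e := S.orderEmbOfFin hSc
    have he : ∀ i, g (e i) = k := fun i =>
      (Finset.mem_filter.mp (hS (S.orderEmbOfFin_mem hSc i))).2
    rcases aux_ramsey_prop t n (fun i j => χ (e i) (e j)) with ⟨f, hf, hc⟩ | ⟨f, hf, hc⟩
    · exfalso
      have hfe : StrictMono (fun i => e (f i)) := e.strictMono.comp hf
      have hend : ChainEnd χ t (k + 1) (e (f ⟨t - 1, by omega⟩)) := by
        refine ⟨e (f ⟨0, by omega⟩), ?_, Finset.univ.image (fun i => e (f i)), ?_, ?_, ?_, ?_, ?_⟩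
        · have := hP (e (f ⟨0, by omega⟩))
          rwa [he] at this
        · rw [Finset.card_image_of_injective _ hfe.injective, Finset.card_univ, Fintype.card_fin]
        · intro a ha c hc' hac
          obtain ⟨i, -, rfl⟩ := Finset.mem_image.mp ha
          obtain ⟨j, -, rfl⟩ := Finset.mem_image.mp hc'
          exact hc i j (hfe.lt_iff_lt.mp hac)
        · exact Finset.mem_image_of_mem (fun i => e (f i)) (Finset.mem_univ _)
        · exact Finset.mem_image_of_mem (fun i => e (f i)) (Finset.mem_univ _)
        · intro x hx
          obtain ⟨i, -, rfl⟩ := Finset.mem_image.mp hx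
          refine ⟨hfe.monotone ?_, hfe.monotone ?_⟩
          · exact Fin.mk_le_of_le_val (Nat.zero_le _)
          · have := i.2
            exact Fin.le_def.mpr (by simp only; omega)
      have hle : k + 1 ≤ g (e (f ⟨t - 1, by omega⟩)) :=
        Nat.le_findGreatest (P := fun j => ChainEnd χ t j _) (Finset.mem_range.mp hk) hend
      rw [he] at hle
      omega
    · exact ⟨fun i => e (f i), e.strictMono.comp hf, hc⟩
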